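/- arXiv:1408.4057 — 2 statements merged into one kernel-verified Lean document; each statement's English description precedes it below -/
import Mathlib

section
/- (Lemma 5.4, properties of the optimal adaptive bandwidth.) Let 0 < β_i ≤ 2 for i = 1,…,d and L > 0. There exist constants c₁₃(β,L) > 0 and c₁₄(β,L) > 0 such that for every p ∈ 𝒫_d(β,L), every t ∈ ℝ^d and every n ≥ 2: (1) B_t(j̄) ≤ c₁₃(β,L) √( σ²_{t,trunc}(j̄) log n ), and (2) √( σ²_{t,trunc}(j̄) ) ≤ c₁₄(β,L) max{ (log n/n)^{β̄/(β̄+1)}, (p(t) log n/n)^{β̄/(2β̄+1)} }. -/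
open MeasureTheory Real
open scoped ENNReal BigOperators

noncomputable section

/-- `Vec d` is `ℝ^d` (with the product structure, used for anisotropic statements). -/
abbrev Vec (d : ℕ) := Fin d → ℝ

/-- Samples of size `n` from `ℝ^d`. -/
abbrev Sample (d n : ℕ) := Fin n → Vec d

/-- The largest integer strictly smaller than `b` (for `b > 0`), i.e. `⌊b⌋` in the paper's
anisotropic Hölder class notation. -/
def hfl (b : ℝ) : ℕ := ⌈b⌉₊ - 1

/-- One-dimensional Taylor polynomial of `f` at `y'` of degree `l`, evaluated at `y`. -/
def taylorPoly (f : ℝ → ℝ) (l : ℕ) (y' y : ℝ) : ℝ :=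
  ∑ k ∈ Finset.range (l + 1), iteratedDeriv k f y' / (Nat.factorial k : ℝ) * (y - y') ^ k

/-- The slice of `f : ℝ^d → ℝ` along coordinate `i` through the point `x`. -/
def sliceFun {d : ℕ} (f : Vec d → ℝ) (i : Fin d) (x : Vec d) : ℝ → ℝ :=
  fun y => f (Function.update x i y)

/-- Anisotropic Hölder condition with exponents `β = (β_1, …, β_d)` and constant `L`:
in each coordinate `i`, the slices admit derivatives up to order `⌊β i⌋` (the largest
integer strictly less than `β i`) and the Taylor remainder of degree `⌊β i⌋` is bounded
by `L |y - y'| ^ (β i)`, uniformly in the remaining coordinates. For `β i ≤ 1` this is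
the usual coordinatewise Hölder condition. -/
def HolderAniso (d : ℕ) (β : Vec d) (L : ℝ) (f : Vec d → ℝ) : Prop :=
  ∀ i : Fin d,
    (∀ x : Vec d, ContDiff ℝ (hfl (β i)) (sliceFun f i x)) ∧
    ∀ (x : Vec d) (y y' : ℝ),
      |sliceFun f i x y - taylorPoly (sliceFun f i x) (hfl (β i)) y' y| ≤ L * |y - y'| ^ (β i)

/-- `p` is a probability density on `ℝ^d` (w.r.t. Lebesgue measure). -/
def IsProbDensity (d : ℕ) (p : Vec d → ℝ) : Prop :=
  Measurable p ∧ (∀ x, 0 ≤ p x) ∧ ∫ x, p x = 1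

/-- The class `𝒫_d(β, L)` of anisotropic Hölder-smooth probability densities. -/
def Pclass (d : ℕ) (β : Vec d) (L : ℝ) (p : Vec d → ℝ) : Prop :=
  IsProbDensity d p ∧ HolderAniso d β L p

/-- The unnormalized harmonic mean `β̄ = (∑ 1/β_i)⁻¹`. -/
def betaBar {d : ℕ} (β : Vec d) : ℝ := (∑ i, (β i)⁻¹)⁻¹

/-- `c₁(β, L) = sup { ‖p‖_∞ : p ∈ 𝒫_d(β, L) }`. -/
def c1const (d : ℕ) (β : Vec d) (L : ℝ) : ℝ :=
  sSup {c | ∃ p x, Pclass d β L p ∧ c = p x}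

/-- The measure on `ℝ^d` with Lebesgue density `p`. -/
def pdfMeasure (d : ℕ) (p : Vec d → ℝ) : Measure (Vec d) :=
  volume.withDensity fun x => ENNReal.ofReal (p x)

/-- The joint law `P^{⊗n}` of an i.i.d. sample of size `n` from the density `p`. -/
def jointMeasure (d n : ℕ) (p : Vec d → ℝ) : Measure (Sample d n) :=
  Measure.pi fun _ => pdfMeasure d p

/-- The `p`-dependent rate `ψ^n_{x,β} = min{ x, (x/n)^{β̄/(2β̄+1)} }` (with `bb = β̄`). -/
def psiRate (n : ℕ) (bb x : ℝ) : ℝ := min x ((x / n) ^ (bb / (2 * bb + 1)))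

end

noncomputable section

/-- `K` is a product kernel `K(x) = ∏ K_i(x_i)` whose factors are nonnegative, symmetric,
supported on `[-1,1]`, continuous on their support, integrate to one and are positive at `0`. -/
def IsProductKernel (d : ℕ) (K : Vec d → ℝ) : Prop :=
  ∃ Ki : Fin d → (ℝ → ℝ),
    (∀ x, K x = ∏ i, Ki i (x i)) ∧
    ∀ i : Fin d,
      (∀ y, 0 ≤ Ki i y) ∧ (∀ y, Ki i (-y) = Ki i y) ∧
      (∀ y, y ∉ Set.Icc (-1 : ℝ) 1 → Ki i y = 0) ∧
      ContinuousOn (Ki i) (Set.Icc (-1) 1) ∧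
      (∫ y, Ki i y = 1) ∧ 0 < Ki i 0

/-- The rescaled kernel `K_h(x) = (∏ h_i)⁻¹ K(x_1/h_1, …, x_d/h_d)`. -/
def scaledKernel (d : ℕ) (K : Vec d → ℝ) (h : Vec d) (x : Vec d) : ℝ :=
  (∏ i, h i)⁻¹ * K (fun i => x i / h i)

/-- The kernel density estimator `p̂_{n,h}(t) = n⁻¹ ∑_i K_h(t - X_i)`. -/
def kde (d n : ℕ) (K : Vec d → ℝ) (h : Vec d) (X : Sample d n) (t : Vec d) : ℝ :=
  (n : ℝ)⁻¹ * ∑ i, scaledKernel d K h (fun j => t j - X i j)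

/-- `‖K‖_sup`. -/
def KsupNorm (d : ℕ) (K : Vec d → ℝ) : ℝ := ⨆ x, |K x|

/-- `‖K‖₂² = ∫ K² dλ^d`. -/
def K2sq (d : ℕ) (K : Vec d → ℝ) : ℝ := ∫ x, (K x) ^ 2

/-- The exact variance proxy `σ_t²(h) = n⁻¹ ((K_h)² ∗ p)(t)`. -/
def sigmaSq (d n : ℕ) (K : Vec d → ℝ) (p : Vec d → ℝ) (h : Vec d) (t : Vec d) : ℝ :=
  (n : ℝ)⁻¹ * ∫ y, (scaledKernel d K h (fun i => t i - y i)) ^ 2 * p y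

/-- The truncation level `log²n / (n² ∏ h_i²)`. -/
def truncLevel (d n : ℕ) (h : Vec d) : ℝ :=
  (Real.log n) ^ 2 / ((n : ℝ) ^ 2 * (∏ i, h i) ^ 2)

/-- `σ²_{t,trunc}(h) = max{ log²n/(n² ∏ h_i²), σ_t²(h) }`. -/
def sigmaSqTrunc (d n : ℕ) (K : Vec d → ℝ) (p : Vec d → ℝ) (h : Vec d) (t : Vec d) : ℝ :=
  max (truncLevel d n h) (sigmaSq d n K p h t)

/-- The empirical variance `σ̃_t²(h) = (n² ∏ h_i²)⁻¹ ∑_i K²((t - X_i)/h)`. -/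
def sigmaTildeSq (d n : ℕ) (K : Vec d → ℝ) (h : Vec d) (X : Sample d n) (t : Vec d) : ℝ :=
  ((n : ℝ) ^ 2 * (∏ i, h i) ^ 2)⁻¹ * ∑ i, (K (fun j => (t j - X i j) / h j)) ^ 2

/-- `σ̃²_{t,trunc}(h) = max{ log²n/(n² ∏ h_i²), σ̃_t²(h) }`. -/
def sigmaTildeSqTrunc (d n : ℕ) (K : Vec d → ℝ) (h : Vec d) (X : Sample d n) (t : Vec d) : ℝ :=
  max (truncLevel d n h) (sigmaTildeSq d n K h X t)

/-- Membership of the multi-index `j` in the dyadic grid `𝒥`, i.e. `∑ j_i ≤ ⌊log₂(n/log²n)⌋`. -/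
def gridOK (d n : ℕ) (j : Fin d → ℕ) : Prop :=
  ((∑ i, j i : ℕ) : ℝ) ≤ Real.logb 2 ((n : ℝ) / (Real.log n) ^ 2)

/-- The bandwidth `(2^{-j_1}, …, 2^{-j_d})` associated with a multi-index `j`. -/
def bwOf (d : ℕ) (j : Fin d → ℕ) : Vec d := fun i => (2 : ℝ) ^ (-(j i : ℝ))

/-- The bias upper bound `B_t(h) = L ∑_i c_{9,i}(β) h_i^{β_i}`,
with `c_{9,i}(β) = ∫ |x_i|^{β_i} |K(x)| dλ^d(x)`. -/
def biasBound (d : ℕ) (K : Vec d → ℝ) (β : Vec d) (L : ℝ) (h : Vec d) : ℝ :=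
  L * ∑ i, (∫ x : Vec d, |x i| ^ (β i) * |K x|) * h i ^ (β i)

/-- The bias `b_t(h) = p(t) - (K_h ∗ p)(t)`. -/
def biasAt (d : ℕ) (K : Vec d → ℝ) (p : Vec d → ℝ) (h : Vec d) (t : Vec d) : ℝ :=
  p t - ∫ y, scaledKernel d K h (fun i => t i - y i) * p y

end

noncomputable section
/-- The constant `c₈(β,L) = min_i ( 2dL ∫ |x_i|^{β_i} K²(x) dλ^d(x) / ‖K‖₂² )^{-1/β_i}`. -/
def c8const (d : ℕ) (K : Vec d → ℝ) (β : Vec d) (L : ℝ) : ℝ :=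
  ⨅ i : Fin d,
    (2 * d * L * (∫ x : Vec d, |x i| ^ (β i) * (K x) ^ 2) / K2sq d K) ^ (-(β i)⁻¹)

/-- The reference (optimal adaptive) bandwidth `h̄` of (5.2), as a function of `p(t)`:
`h̄_i = c₈(β,L) max{ (log n/n)^{(β̄/(β̄+1))(1/β_i)}, (p(t) log n/n)^{(β̄/(2β̄+1))(1/β_i)} }`. -/
def hbar (d : ℕ) (K : Vec d → ℝ) (β : Vec d) (L : ℝ) (n : ℕ) (pt : ℝ) : Vec d :=
  fun i => c8const d K β L *
    max ((Real.log n / n) ^ ((betaBar β / (betaBar β + 1)) * (β i)⁻¹))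
        ((pt * Real.log n / n) ^ ((betaBar β / (2 * betaBar β + 1)) * (β i)⁻¹))

/-- The dyadic approximation `j̄_i = ⌊log₂(1/h̄_i)⌋ + 1` of the reference bandwidth. -/
def jbar (d : ℕ) (K : Vec d → ℝ) (β : Vec d) (L : ℝ) (n : ℕ) (pt : ℝ) : Fin d → ℤ :=
  fun i => ⌊Real.logb 2 (1 / hbar d K β L n pt i)⌋ + 1

/-- The bandwidth `(2^{-j_1}, …, 2^{-j_d})` associated with an integer multi-index. -/
def bwOfZ (d : ℕ) (j : Fin d → ℤ) : Vec d := fun i => (2 : ℝ) ^ (-(j i : ℝ))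
end

/-!
Write `r = max {(log n / n) ^ (β̄ / (β̄ + 1)), (p(t) log n / n) ^ (β̄ / (2 β̄ + 1))}`. The dyadic
reference bandwidth satisfies `h_i ≍ c₈ r ^ (1 / β_i)`, so every bias term `h_i ^ β_i` is of order
`r` and the volume `∏ h_i` is of order `r ^ (1 / β̄)`. As `K` is even in each coordinate, the
first-order Taylor terms of `p` integrate to zero against `K²`, and the choice of `c₈` gives
`|∫ K²(x) p(t - h x) dx - p(t) ‖K‖₂²| ≤ r ‖K‖₂² / 2`. The rate `r` satisfies
`log n / n ≤ r ^ (1 + 1 / β̄)` and `p(t) log n / n ≤ r ^ (2 + 1 / β̄)`, with equality in one of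
them: the inequalities bound the truncated variance by a multiple of `r²`. If the first is an
equality, the truncation level alone is of order `r²`; if the second is, then `p(t) ≥ r`, and the
exact variance times `log n` is of order `r²`.
-/

section CoordinateMaps

variable {ι : Type*}

/-- The reflection of `ℝ^ι` that changes the sign of the `i`-th coordinate. -/
def coordReflect [DecidableEq ι] (i : ι) (x : ι → ℝ) : ι → ℝ := Function.update x i (-x i)

lemma coordReflect_self [DecidableEq ι] (i : ι) (x : ι → ℝ) : coordReflect i x i = -x i :=
  Function.update_self ..

variable [Fintype ι]

lemma measurePreserving_coordReflect [DecidableEq ι] (i : ι) :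
    MeasurePreserving (coordReflect i) := by
  have hcoord : ∀ j, MeasurePreserving fun y : ℝ => if j = i then -y else y := fun j => by
    split_ifs
    exacts [Measure.measurePreserving_neg volume, MeasurePreserving.id volume]
  convert volume_preserving_pi hcoord using 1
  funext x j
  rcases eq_or_ne j i with rfl | hj <;> simp [coordReflect, *]

lemma integral_comp_coordReflect [DecidableEq ι] {E : Type*} [NormedAddCommGroup E]
    [NormedSpace ℝ E] (i : ι) (f : (ι → ℝ) → E) : ∫ x, f (coordReflect i x) = ∫ x, f x := by
  have hinv : Function.Involutive (coordReflect i) := fun x => by simp [coordReflect]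
  have hmp := measurePreserving_coordReflect i
  exact hmp.integral_comp (MeasurableEquiv.ofInvolutive _ hinv hmp.measurable).measurableEmbedding f

lemma integral_comp_pi_mul_left {E : Type*} [NormedAddCommGroup E] [NormedSpace ℝ E] {h : ι → ℝ}
    (hh : ∀ i, h i ≠ 0) (f : (ι → ℝ) → E) : ∫ x, f (h * x) = |∏ i, h i|⁻¹ • ∫ x, f x := by
  classical
  have hprod : ∏ i, h i ≠ 0 := Finset.prod_ne_zero_iff.2 fun i _ => hh i
  have hvol : ENNReal.ofReal |∏ i, h i| • Measure.map (fun x => h * x) volume = volume := by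
    have hmap : ⇑(Matrix.toLin' (Matrix.diagonal h)) = fun x => h * x := by
      funext x i
      simp [Matrix.mulVec_diagonal]
    simpa only [Matrix.det_diagonal, hmap] using
      Real.smul_map_diagonal_volume_pi (D := h) (by rwa [Matrix.det_diagonal])
  have hemb : MeasurableEmbedding fun x : ι → ℝ => h * x :=
    (MeasurableEquiv.piCongrRight fun i => MeasurableEquiv.mulLeft₀ (h i)
      (hh i)).measurableEmbedding
  conv_rhs => rw [← hvol]
  rw [integral_smul_measure, hemb.integral_map, ENNReal.toReal_ofReal (abs_nonneg _),
    inv_smul_smul₀ (abs_ne_zero.2 hprod)]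

end CoordinateMaps

section EvenWeights

variable {d : ℕ} {β : Vec d} {w : Vec d → ℝ}

/-- A nonnegative integrable weight on `ℝ^d` that is even in each coordinate, so that first-order
Taylor terms integrate to zero against it, and whose `β_i`-th absolute moment in coordinate `i` is
finite. -/
structure IsEvenWeight (β : Vec d) (w : Vec d → ℝ) : Prop where
  nonneg : ∀ x, 0 ≤ w x
  even : ∀ i x, w (coordReflect i x) = w x
  integrable : Integrable w
  integrable_moment : ∀ i, Integrable fun x => |x i| ^ β i * w x

lemma IsEvenWeight.moment_pos (hw : IsEvenWeight β w) (hpos : 0 < ∫ x, w x) (i : Fin d) :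
    0 < ∫ x, |x i| ^ β i * w x := by
  have hnonneg : ∀ x, 0 ≤ |x i| ^ β i * w x := fun x => mul_nonneg (by positivity) (hw.nonneg x)
  refine (integral_nonneg hnonneg).lt_of_ne' fun hzero => hpos.ne' ?_
  rw [integral_eq_zero_iff_of_nonneg hnonneg (hw.integrable_moment i)] at hzero
  refine integral_eq_zero_of_ae ?_
  filter_upwards [hzero, Measure.ae_eval_ne (fun _ => volume) i 0] with x hx hxi
  exact (mul_eq_zero.1 hx).resolve_left (Real.rpow_pos_of_pos (abs_pos.2 hxi) _).ne'

lemma isEvenWeight_prod {f : Fin d → ℝ → ℝ} (hnonneg : ∀ i y, 0 ≤ f i y)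
    (heven : ∀ i, (f i).Even) (hint : ∀ i, Integrable (f i))
    (hmoment : ∀ i, Integrable fun y => |y| ^ β i * f i y) :
    IsEvenWeight β fun x => ∏ i, f i (x i) where
  nonneg x := Finset.prod_nonneg fun i _ => hnonneg i _
  even i x := Finset.prod_congr rfl fun j _ => by
    rcases eq_or_ne j i with rfl | hj
    · rw [coordReflect_self, heven]
    · rw [coordReflect, Function.update_of_ne hj]
  integrable := Integrable.fintype_prod hint
  integrable_moment i := by
    have hfactor : ∀ j, Integrable fun y => (if j = i then |y| ^ β j else 1) * f j y := fun j => by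
      split_ifs
      · exact hmoment j
      · simpa only [one_mul] using hint j
    have hprod : Integrable fun x : Vec d => ∏ j, (if j = i then |x j| ^ β j else 1) * f j (x j) :=
      Integrable.fintype_prod hfactor
    simpa only [Finset.prod_mul_distrib, Finset.prod_ite_eq', Finset.mem_univ, if_true] using hprod

lemma isEvenWeight_prod_of_continuousOn_Icc {f : Fin d → ℝ → ℝ} {a b : ℝ} (hβ : ∀ i, 0 ≤ β i)
    (hnonneg : ∀ i y, 0 ≤ f i y) (heven : ∀ i, (f i).Even)
    (hcont : ∀ i, ContinuousOn (f i) (Set.Icc a b)) (hsupp : ∀ i, ∀ y ∉ Set.Icc a b, f i y = 0) :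
    IsEvenWeight β fun x => ∏ i, f i (x i) := by
  refine isEvenWeight_prod hnonneg heven
    (fun i => (hcont i).integrableOn_Icc.integrable_of_forall_notMem_eq_zero (hsupp i)) fun i => ?_
  have habs : Continuous fun y : ℝ => |y| ^ β i :=
    continuous_abs.rpow_const fun _ => Or.inr (hβ i)
  refine (habs.continuousOn.mul (hcont i)).integrableOn_Icc.integrable_of_forall_notMem_eq_zero
    fun y hy => ?_
  rw [Pi.mul_apply, hsupp i y hy, mul_zero]

end EvenWeights

section EvenKernels

variable {d : ℕ} {β : Vec d} {K : Vec d → ℝ}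

/-- A nonzero square-integrable kernel on `ℝ^d`, even in each coordinate, for which the moments of
`|K|` entering the bias bound and those of `K²` entering `c₈` are finite. -/
structure IsEvenKernel (β : Vec d) (K : Vec d → ℝ) : Prop where
  abs : IsEvenWeight β fun x => |K x|
  sq : IsEvenWeight β fun x => K x ^ 2
  integral_abs_pos : 0 < ∫ x, |K x|

lemma IsEvenKernel.K2sq_pos (hK : IsEvenKernel β K) : 0 < K2sq d K := by
  refine (integral_nonneg hK.sq.nonneg).lt_of_ne' fun hzero => hK.integral_abs_pos.ne' ?_
  rw [integral_eq_zero_iff_of_nonneg hK.sq.nonneg hK.sq.integrable] at hzero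
  refine integral_eq_zero_of_ae ?_
  filter_upwards [hzero] with x hx
  exact abs_eq_zero.2 (pow_eq_zero_iff two_ne_zero |>.1 hx)

lemma IsProductKernel.isEvenKernel (hK : IsProductKernel d K) (hβ : ∀ i, 0 ≤ β i) :
    IsEvenKernel β K := by
  obtain ⟨Ki, hprod, hKi⟩ := hK
  choose hnonneg heven hsupp hcont hone _ using hKi
  have habs : (fun x => |K x|) = fun x => ∏ i, Ki i (x i) := funext fun x => by
    rw [hprod, abs_of_nonneg (Finset.prod_nonneg fun i _ => hnonneg i _)]
  have hsq : (fun x => K x ^ 2) = fun x => ∏ i, Ki i (x i) ^ 2 := funext fun x => by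
    rw [hprod, Finset.prod_pow]
  refine ⟨?_, ?_, ?_⟩
  · rw [habs]
    exact isEvenWeight_prod_of_continuousOn_Icc hβ hnonneg heven hcont hsupp
  · rw [hsq]
    refine isEvenWeight_prod_of_continuousOn_Icc hβ (fun i y => sq_nonneg (Ki i y))
      (fun i y => congrArg (· ^ 2) (heven i y)) (fun i => (hcont i).pow 2) fun i y hy => ?_
    rw [hsupp i y hy, zero_pow two_ne_zero]
  · rw [habs, integral_fintype_prod_volume_eq_prod]
    simp only [hone, Finset.prod_const_one, zero_lt_one]

lemma sigmaSq_eq_integral (K p : Vec d → ℝ) {h : Vec d} (hh : ∀ i, 0 < h i) (n : ℕ) (t : Vec d) :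
    sigmaSq d n K p h t = (∫ x, K x ^ 2 * p (t - h * x)) / (n * ∏ i, h i) := by
  have hprod : 0 < ∏ i, h i := Finset.prod_pos fun i _ => hh i
  have hscaled : ∀ x, scaledKernel d K h (h * x) = (∏ i, h i)⁻¹ * K x := fun x => by
    simp only [scaledKernel, Pi.mul_apply, mul_div_cancel_left₀ _ (hh _).ne']
  have hconv : ∫ y, scaledKernel d K h (fun i => t i - y i) ^ 2 * p y =
      ∫ u, scaledKernel d K h u ^ 2 * p (t - u) := by
    rw [← integral_sub_left_eq_self _ volume t]
    simp only [Pi.sub_apply, sub_sub_cancel]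
  have hsubst := integral_comp_pi_mul_left (fun i => (hh i).ne') fun u =>
    scaledKernel d K h u ^ 2 * p (t - u)
  simp_rw [hscaled, mul_pow, mul_assoc, integral_const_mul, abs_of_pos hprod, smul_eq_mul]
    at hsubst
  rw [sigmaSq, hconv, ← mul_right_inj' (inv_ne_zero hprod.ne'), mul_left_comm, ← hsubst]
  field_simp

end EvenKernels

section Smoothing

variable {d : ℕ} {w p : Vec d → ℝ} {β t h : Vec d} {L : ℝ} {i : Fin d} {S : Finset (Fin d)}

lemma HolderAniso.abs_second_difference_le (hp : HolderAniso d β L p) (hβ : β i ≤ 2) (x : Vec d)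
    (u : ℝ) :
    |p (Function.update x i (x i - u)) + p (Function.update x i (x i + u)) - 2 * p x| ≤
      2 * (L * |u| ^ β i) := by
  obtain ⟨slope, hslope⟩ : ∃ a, ∀ y,
      |p (Function.update x i y) - (p x + a * (y - x i))| ≤ L * |y - x i| ^ β i := by
    have htaylor := fun y => (hp i).2 x y (x i)
    have hdeg : hfl (β i) ≤ 1 := by
      have hceil : ⌈β i⌉₊ ≤ 2 := Nat.ceil_le.2 (by exact_mod_cast hβ)
      rw [hfl]
      omega
    interval_cases hfl (β i)
    · exact ⟨0, by simpa [taylorPoly, sliceFun] using htaylor⟩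
    · exact ⟨deriv (sliceFun p i x) (x i), by
        simpa [taylorPoly, sliceFun, Finset.sum_range_succ] using htaylor⟩
  have hleft := hslope (x i - u)
  have hright := hslope (x i + u)
  rw [sub_sub_cancel_left, abs_neg, abs_le] at hleft
  rw [add_sub_cancel_left, abs_le] at hright
  rw [abs_le]
  constructor <;> linarith [hleft.1, hleft.2, hright.1, hright.2]

/-- The point `t - h x` with only the coordinates in `S` moved away from `t`; it interpolates
between `t` and `t - h x` one coordinate at a time. -/
def partialShift (t h : Vec d) (S : Finset (Fin d)) (x : Vec d) : Vec d :=
  S.piecewise (t - h * x) t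

lemma measurable_partialShift (t h : Vec d) (S : Finset (Fin d)) :
    Measurable (partialShift t h S) := by
  refine measurable_pi_lambda _ fun j => ?_
  by_cases hj : j ∈ S <;> simp only [partialShift, Finset.piecewise, hj, if_true, if_false,
    Pi.sub_apply, Pi.mul_apply] <;> fun_prop

lemma partialShift_insert (hi : i ∉ S) (x : Vec d) :
    partialShift t h (insert i S) x =
      Function.update (partialShift t h S x) i (partialShift t h S x i - h i * x i) := by
  rw [partialShift, Finset.piecewise_insert, partialShift, Finset.piecewise_eq_of_notMem _ _ _ hi]
  rfl

lemma partialShift_insert_coordReflect (hi : i ∉ S) (x : Vec d) :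
    partialShift t h (insert i S) (coordReflect i x) =
      Function.update (partialShift t h S x) i (partialShift t h S x i + h i * x i) := by
  funext j
  rcases eq_or_ne j i with rfl | hj
  · simp [partialShift, coordReflect, hi]
  · by_cases hjS : j ∈ S <;> simp [partialShift, coordReflect, hj, hjS]

lemma HolderAniso.abs_partialShift_second_difference_le (hp : HolderAniso d β L p) (hβ : β i ≤ 2)
    (hi : i ∉ S) (x : Vec d) :
    |p (partialShift t h (insert i S) x) + p (partialShift t h (insert i S) (coordReflect i x)) -
      2 * p (partialShift t h S x)| ≤ 2 * (L * |h i| ^ β i) * |x i| ^ β i := by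
  rw [partialShift_insert hi, partialShift_insert_coordReflect hi]
  refine (hp.abs_second_difference_le hβ _ (h i * x i)).trans_eq ?_
  rw [abs_mul, Real.mul_rpow (abs_nonneg _) (abs_nonneg _)]
  ring

/-- Nonnegativity of `p` at the reflected point turns the second-difference bound into an upper
bound for `p` after one further shift, so no global bound on `p` is needed. -/
lemma IsEvenWeight.integrable_mul_partialShift (hw : IsEvenWeight β w)
    (hp_meas : Measurable p) (hp_nonneg : ∀ x, 0 ≤ p x) (hp : HolderAniso d β L p)
    (hβ : ∀ i, β i ≤ 2) (t h : Vec d) (S : Finset (Fin d)) :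
    Integrable fun x => w x * p (partialShift t h S x) := by
  induction S using Finset.induction_on with
  | empty => simpa [partialShift] using hw.integrable.mul_const (p t)
  | insert i S hi ih =>
    refine ((ih.const_mul 2).add ((hw.integrable_moment i).const_mul
      (2 * (L * |h i| ^ β i)))).mono' (hw.integrable.aestronglyMeasurable.mul
        (hp_meas.comp (measurable_partialShift t h _)).aestronglyMeasurable)
      (Filter.Eventually.of_forall fun x => ?_)
    have hshift : p (partialShift t h (insert i S) x) ≤
        2 * p (partialShift t h S x) + 2 * (L * |h i| ^ β i) * |x i| ^ β i := by
      have hdiff := hp.abs_partialShift_second_difference_le (t := t) (h := h) (hβ i) hi x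
      linarith [(abs_le.1 hdiff).2,
        hp_nonneg (partialShift t h (insert i S) (coordReflect i x))]
    rw [Real.norm_of_nonneg (mul_nonneg (hw.nonneg x) (hp_nonneg _))]
    refine (mul_le_mul_of_nonneg_left hshift (hw.nonneg x)).trans_eq ?_
    simp only [Pi.add_apply]
    ring

lemma IsEvenWeight.abs_integral_partialShift_insert_sub_le (hw : IsEvenWeight β w)
    (hp_meas : Measurable p) (hp_nonneg : ∀ x, 0 ≤ p x) (hp : HolderAniso d β L p)
    (hβ : ∀ i, β i ≤ 2) (hi : i ∉ S) :
    |(∫ x, w x * p (partialShift t h (insert i S) x)) - ∫ x, w x * p (partialShift t h S x)| ≤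
      L * |h i| ^ β i * ∫ x, |x i| ^ β i * w x := by
  set F := fun x => w x * p (partialShift t h S x)
  set G := fun x => w x * p (partialShift t h (insert i S) x)
  have hF : Integrable F := hw.integrable_mul_partialShift hp_meas hp_nonneg hp hβ t h S
  have hG : Integrable G := hw.integrable_mul_partialShift hp_meas hp_nonneg hp hβ t h _
  have hGrefl : Integrable fun x => G (coordReflect i x) :=
    (measurePreserving_coordReflect i).integrable_comp_of_integrable hG
  have hsymm : ∫ x, (G x + G (coordReflect i x) - 2 * F x) =
      2 * ((∫ x, G x) - ∫ x, F x) := by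
    have hsub := integral_sub (hG.add hGrefl) (hF.const_mul 2)
    simp only [Pi.add_apply] at hsub
    rw [hsub, integral_add hG hGrefl, integral_comp_coordReflect i G, integral_const_mul]
    ring
  have hbound : |∫ x, (G x + G (coordReflect i x) - 2 * F x)| ≤
      ∫ x, 2 * (L * |h i| ^ β i) * (|x i| ^ β i * w x) := by
    rw [← Real.norm_eq_abs]
    refine norm_integral_le_of_norm_le ((hw.integrable_moment i).const_mul _)
      (Filter.Eventually.of_forall fun x => ?_)
    have hfactor : G x + G (coordReflect i x) - 2 * F x = w x *
        (p (partialShift t h (insert i S) x) + p (partialShift t h (insert i S) (coordReflect i x))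
          - 2 * p (partialShift t h S x)) := by
      simp only [F, G, hw.even]
      ring
    rw [hfactor, norm_mul, Real.norm_of_nonneg (hw.nonneg x), Real.norm_eq_abs]
    refine (mul_le_mul_of_nonneg_left (hp.abs_partialShift_second_difference_le (hβ i) hi x)
      (hw.nonneg x)).trans_eq ?_
    ring
  rw [hsymm, integral_const_mul, abs_mul, abs_two] at hbound
  linarith

lemma IsEvenWeight.abs_integral_partialShift_sub_le (hw : IsEvenWeight β w)
    (hp_meas : Measurable p) (hp_nonneg : ∀ x, 0 ≤ p x) (hp : HolderAniso d β L p)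
    (hβ : ∀ i, β i ≤ 2) (t h : Vec d) (S : Finset (Fin d)) :
    |(∫ x, w x * p (partialShift t h S x)) - p t * ∫ x, w x| ≤
      ∑ i ∈ S, L * |h i| ^ β i * ∫ x, |x i| ^ β i * w x := by
  induction S using Finset.induction_on with
  | empty => simp [partialShift, integral_mul_const, mul_comm]
  | insert i S hi ih =>
    rw [Finset.sum_insert hi]
    exact (abs_sub_le _ (∫ x, w x * p (partialShift t h S x)) _).trans (add_le_add
      (hw.abs_integral_partialShift_insert_sub_le hp_meas hp_nonneg hp hβ hi) ih)

lemma IsEvenWeight.abs_integral_shift_sub_le (hw : IsEvenWeight β w)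
    (hp_meas : Measurable p) (hp_nonneg : ∀ x, 0 ≤ p x) (hp : HolderAniso d β L p)
    (hβ : ∀ i, β i ≤ 2) (t h : Vec d) :
    |(∫ x, w x * p (t - h * x)) - p t * ∫ x, w x| ≤
      ∑ i, L * |h i| ^ β i * ∫ x, |x i| ^ β i * w x := by
  simpa [partialShift] using
    hw.abs_integral_partialShift_sub_le hp_meas hp_nonneg hp hβ t h Finset.univ

end Smoothing

section BalancedRate

/-- With `b = β̄`, `x = log n / n` and `y = p(t) log n / n`, this is the pointwise adaptive rate of
estimation: the least `r` such that `x ≤ r ^ (1 + 1 / b)` and `y ≤ r ^ (2 + 1 / b)`. -/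
noncomputable def balancedRate (b x y : ℝ) : ℝ := max (x ^ (b / (b + 1))) (y ^ (b / (2 * b + 1)))

variable {b x y : ℝ}

lemma balancedRate_pos (b y : ℝ) (hx : 0 < x) : 0 < balancedRate b x y :=
  lt_max_of_lt_left (Real.rpow_pos_of_pos hx _)

lemma balancedRate_eq_max_inv (hb : 0 < b) (x y : ℝ) :
    balancedRate b x y = max (x ^ (1 + b⁻¹)⁻¹) (y ^ (2 + b⁻¹)⁻¹) := by
  rw [balancedRate]
  congr 2 <;> field_simp

lemma le_balancedRate_mul_rpow (hb : 0 < b) (hx : 0 < x) (y : ℝ) :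
    x ≤ balancedRate b x y * balancedRate b x y ^ b⁻¹ := by
  have hr := balancedRate_pos b y hx
  rw [← Real.rpow_one_add' hr.le (by positivity),
    ← Real.rpow_inv_le_iff_of_pos hx.le hr.le (by positivity), balancedRate_eq_max_inv hb]
  exact le_max_left _ _

lemma le_balancedRate_sq_mul_rpow (hb : 0 < b) (hx : 0 < x) (hy : 0 ≤ y) :
    y ≤ balancedRate b x y ^ 2 * balancedRate b x y ^ b⁻¹ := by
  have hr := balancedRate_pos b y hx
  rw [← Real.rpow_two, ← Real.rpow_add hr,
    ← Real.rpow_inv_le_iff_of_pos hy hr.le (by positivity), balancedRate_eq_max_inv hb]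
  exact le_max_right _ _

lemma eq_balancedRate_mul_rpow_or (hb : 0 < b) (hx : 0 < x) (hy : 0 ≤ y) :
    x = balancedRate b x y * balancedRate b x y ^ b⁻¹ ∨
      y = balancedRate b x y ^ 2 * balancedRate b x y ^ b⁻¹ := by
  have hr := balancedRate_pos b y hx
  rw [← Real.rpow_one_add' hr.le (by positivity), ← Real.rpow_two, ← Real.rpow_add hr,
    balancedRate_eq_max_inv hb]
  refine (max_choice (x ^ (1 + b⁻¹)⁻¹) (y ^ (2 + b⁻¹)⁻¹)).imp (fun h => ?_) fun h => ?_
  · rw [h, Real.rpow_inv_rpow hx.le (by positivity)]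
  · rw [h, Real.rpow_inv_rpow hy (by positivity)]

lemma max_rpow_mul {u v e : ℝ} (hx : 0 ≤ x) (hy : 0 ≤ y) (he : 0 ≤ e) :
    max (x ^ (u * e)) (y ^ (v * e)) = max (x ^ u) (y ^ v) ^ e := by
  rw [Real.rpow_mul hx, Real.rpow_mul hy]
  exact ((Real.monotoneOn_rpow_Ici_of_exponent_nonneg he).map_max (Real.rpow_nonneg hx u)
    (Real.rpow_nonneg hy v)).symm

end BalancedRate

section RateBandwidths

variable {d : ℕ} {K : Vec d → ℝ} {β h : Vec d} {L c r : ℝ}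

/-- Bandwidths `h` with `h_i ∈ [c r ^ (1 / β_i) / 2, c r ^ (1 / β_i)]`, so that all the bias terms
`h_i ^ β_i` are of order `r`. The factor `2` leaves room for rounding to a dyadic bandwidth. -/
structure IsRateBandwidth (β : Vec d) (c r : ℝ) (h : Vec d) : Prop where
  const_pos : 0 < c
  rate_pos : 0 < r
  mem_Icc : ∀ i, h i ∈ Set.Icc (c * r ^ (β i)⁻¹ / 2) (c * r ^ (β i)⁻¹)

lemma IsRateBandwidth.pos (hh : IsRateBandwidth β c r h) (i : Fin d) : 0 < h i :=
  (half_pos (mul_pos hh.const_pos (Real.rpow_pos_of_pos hh.rate_pos _))).trans_le (hh.mem_Icc i).1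

lemma IsRateBandwidth.prod_pos (hh : IsRateBandwidth β c r h) : 0 < ∏ i, h i :=
  Finset.prod_pos fun i _ => hh.pos i

lemma IsRateBandwidth.rpow_le (hh : IsRateBandwidth β c r h) {i : Fin d} (hβ : 0 < β i) :
    h i ^ β i ≤ c ^ β i * r := by
  refine (Real.rpow_le_rpow (hh.pos i).le (hh.mem_Icc i).2 hβ.le).trans_eq ?_
  rw [Real.mul_rpow hh.const_pos.le (Real.rpow_nonneg hh.rate_pos.le _),
    Real.rpow_inv_rpow hh.rate_pos.le hβ.ne']

lemma prod_const_mul_rpow_inv (β : Vec d) (c : ℝ) (hr : 0 < r) :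
    ∏ i, c * r ^ (β i)⁻¹ = c ^ d * r ^ (betaBar β)⁻¹ := by
  rw [Finset.prod_mul_distrib, Finset.prod_const, Finset.card_univ, Fintype.card_fin, betaBar,
    inv_inv, Real.rpow_sum_of_pos hr]

lemma IsRateBandwidth.prod_le (hh : IsRateBandwidth β c r h) :
    ∏ i, h i ≤ c ^ d * r ^ (betaBar β)⁻¹ := by
  rw [← prod_const_mul_rpow_inv β c hh.rate_pos]
  exact Finset.prod_le_prod (fun i _ => (hh.pos i).le) fun i _ => (hh.mem_Icc i).2

lemma IsRateBandwidth.le_prod (hh : IsRateBandwidth β c r h) :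
    (c / 2) ^ d * r ^ (betaBar β)⁻¹ ≤ ∏ i, h i := by
  have hc := hh.const_pos
  have hr := hh.rate_pos
  rw [← prod_const_mul_rpow_inv β (c / 2) hr]
  refine Finset.prod_le_prod (fun i _ => by positivity) fun i _ => ?_
  rw [div_mul_eq_mul_div]
  exact (hh.mem_Icc i).1

lemma IsRateBandwidth.biasBound_le (hh : IsRateBandwidth β c r h) (hβ : ∀ i, 0 < β i)
    (hL : 0 ≤ L) : biasBound d K β L h ≤ biasBound d K β L (fun _ => c) * r := by
  rw [biasBound, biasBound, mul_assoc, Finset.sum_mul]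
  refine mul_le_mul_of_nonneg_left (Finset.sum_le_sum fun i _ => ?_) hL
  rw [mul_assoc]
  exact mul_le_mul_of_nonneg_left (hh.rpow_le (hβ i)) (integral_nonneg fun x => by positivity)

end RateBandwidths

section TruncatedVariance

variable {d n : ℕ} {K p : Vec d → ℝ} {β h t : Vec d} {c r : ℝ}

lemma truncLevel_eq_sq (n : ℕ) (h : Vec d) :
    truncLevel d n h = (Real.log n / n / ∏ i, h i) ^ 2 := by
  rw [truncLevel, div_div, div_pow, mul_pow]

lemma IsRateBandwidth.le_truncLevel (hh : IsRateBandwidth β c r h)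
    (hbal : Real.log n / n = r * r ^ (betaBar β)⁻¹) :
    ((c ^ d)⁻¹ * r) ^ 2 ≤ truncLevel d n h := by
  have hc := hh.const_pos
  have hr := hh.rate_pos
  have hprod := hh.prod_pos
  rw [truncLevel_eq_sq, hbal]
  gcongr
  rw [le_div_iff₀ hprod]
  calc (c ^ d)⁻¹ * r * ∏ i, h i ≤ (c ^ d)⁻¹ * r * (c ^ d * r ^ (betaBar β)⁻¹) := by
        gcongr
        exact hh.prod_le
    _ = r * r ^ (betaBar β)⁻¹ := by field_simp

lemma IsRateBandwidth.truncLevel_le (hh : IsRateBandwidth β c r h)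
    (hle : Real.log n / n ≤ r * r ^ (betaBar β)⁻¹) :
    truncLevel d n h ≤ (((c / 2) ^ d)⁻¹ * r) ^ 2 := by
  have hc := hh.const_pos
  have hr := hh.rate_pos
  have hprod := hh.prod_pos
  have : 0 ≤ Real.log n := Real.log_natCast_nonneg n
  rw [truncLevel_eq_sq]
  gcongr
  rw [div_le_iff₀ hprod]
  calc Real.log n / n ≤ r * r ^ (betaBar β)⁻¹ := hle
    _ = ((c / 2) ^ d)⁻¹ * r * ((c / 2) ^ d * r ^ (betaBar β)⁻¹) := by field_simp
    _ ≤ ((c / 2) ^ d)⁻¹ * r * ∏ i, h i := by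
        gcongr
        exact hh.le_prod

lemma IsRateBandwidth.le_sigmaSq_mul_log (hh : IsRateBandwidth β c r h) (hn : 1 < n)
    (hsmooth : |(∫ x, K x ^ 2 * p (t - h * x)) - p t * K2sq d K| ≤ r * (K2sq d K / 2))
    (hle : Real.log n / n ≤ r * r ^ (betaBar β)⁻¹)
    (hbal : p t * Real.log n / n = r ^ 2 * r ^ (betaBar β)⁻¹) :
    K2sq d K / (2 * c ^ d) * r ^ 2 ≤ sigmaSq d n K p h t * Real.log n := by
  have hc := hh.const_pos
  have hr := hh.rate_pos
  have hprod := hh.prod_pos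
  have hn_pos : (0 : ℝ) < n := by positivity
  have hlog : 0 < Real.log n := Real.log_pos (by exact_mod_cast hn)
  have hκ : 0 ≤ K2sq d K := integral_nonneg fun x => sq_nonneg (K x)
  have hr_le : r ≤ p t := by
    refine le_of_mul_le_mul_right ?_ (div_pos hlog hn_pos)
    calc r * (Real.log n / n) ≤ r * (r * r ^ (betaBar β)⁻¹) := by gcongr
      _ = p t * (Real.log n / n) := by rw [← mul_div_assoc, hbal]; ring
  have hintegral : p t * K2sq d K / 2 ≤ ∫ x, K x ^ 2 * p (t - h * x) := by
    nlinarith [(abs_le.1 hsmooth).1]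
  calc K2sq d K / (2 * c ^ d) * r ^ 2
      = K2sq d K / 2 * (r ^ 2 * r ^ (betaBar β)⁻¹) / (c ^ d * r ^ (betaBar β)⁻¹) := by field_simp
    _ ≤ K2sq d K / 2 * (r ^ 2 * r ^ (betaBar β)⁻¹) / ∏ i, h i := by
        gcongr
        exact hh.prod_le
    _ = p t * K2sq d K / 2 / (n * ∏ i, h i) * Real.log n := by
        rw [← hbal]
        field_simp
    _ ≤ sigmaSq d n K p h t * Real.log n := by
        rw [sigmaSq_eq_integral K p hh.pos]
        gcongr

lemma IsRateBandwidth.sigmaSq_le (hh : IsRateBandwidth β c r h) (hn : 2 ≤ n)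
    (hsmooth : |(∫ x, K x ^ 2 * p (t - h * x)) - p t * K2sq d K| ≤ r * (K2sq d K / 2))
    (hle : Real.log n / n ≤ r * r ^ (betaBar β)⁻¹)
    (hle_sq : p t * Real.log n / n ≤ r ^ 2 * r ^ (betaBar β)⁻¹) :
    sigmaSq d n K p h t ≤ 2 * K2sq d K / (Real.log 2 * (c / 2) ^ d) * r ^ 2 := by
  have hc := hh.const_pos
  have hr := hh.rate_pos
  have hprod := hh.prod_pos
  have hlog_two : 0 < Real.log 2 := Real.log_pos one_lt_two
  have hlog_le : Real.log 2 ≤ Real.log n := Real.log_le_log two_pos (by exact_mod_cast hn)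
  have hlog : 0 < Real.log n := hlog_two.trans_le hlog_le
  have hκ : 0 ≤ K2sq d K := integral_nonneg fun x => sq_nonneg (K x)
  have hintegral : ∫ x, K x ^ 2 * p (t - h * x) ≤ (p t + r) * K2sq d K := by
    nlinarith [(abs_le.1 hsmooth).2]
  calc sigmaSq d n K p h t ≤ (p t + r) * K2sq d K / (n * ∏ i, h i) := by
        rw [sigmaSq_eq_integral K p hh.pos]
        gcongr
    _ = K2sq d K * (p t * Real.log n / n + r * (Real.log n / n)) /
          (Real.log n * ∏ i, h i) := by field_simp
    _ ≤ K2sq d K * (r ^ 2 * r ^ (betaBar β)⁻¹ + r * (r * r ^ (betaBar β)⁻¹)) /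
          (Real.log 2 * ((c / 2) ^ d * r ^ (betaBar β)⁻¹)) := by
        gcongr
        exact hh.le_prod
    _ = 2 * K2sq d K / (Real.log 2 * (c / 2) ^ d) * r ^ 2 := by
        field_simp
        ring

lemma IsRateBandwidth.le_sigmaSqTrunc_mul_log (hh : IsRateBandwidth β c r h) (hn : 2 ≤ n)
    (hsmooth : |(∫ x, K x ^ 2 * p (t - h * x)) - p t * K2sq d K| ≤ r * (K2sq d K / 2))
    (hle : Real.log n / n ≤ r * r ^ (betaBar β)⁻¹)
    (hbal : Real.log n / n = r * r ^ (betaBar β)⁻¹ ∨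
      p t * Real.log n / n = r ^ 2 * r ^ (betaBar β)⁻¹) :
    min (Real.log 2 / (c ^ d) ^ 2) (K2sq d K / (2 * c ^ d)) * r ^ 2 ≤
      sigmaSqTrunc d n K p h t * Real.log n := by
  have hlog_le : Real.log 2 ≤ Real.log n := Real.log_le_log two_pos (by exact_mod_cast hn)
  have : 0 ≤ Real.log n := Real.log_natCast_nonneg n
  rcases hbal with hbal | hbal
  · calc min (Real.log 2 / (c ^ d) ^ 2) (K2sq d K / (2 * c ^ d)) * r ^ 2
        ≤ Real.log 2 / (c ^ d) ^ 2 * r ^ 2 := by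
          gcongr
          exact min_le_left _ _
      _ = ((c ^ d)⁻¹ * r) ^ 2 * Real.log 2 := by ring
      _ ≤ truncLevel d n h * Real.log n :=
          mul_le_mul (hh.le_truncLevel hbal) hlog_le (Real.log_nonneg one_le_two)
            ((sq_nonneg _).trans (hh.le_truncLevel hbal))
      _ ≤ sigmaSqTrunc d n K p h t * Real.log n := by
          gcongr
          exact le_max_left _ _
  · calc min (Real.log 2 / (c ^ d) ^ 2) (K2sq d K / (2 * c ^ d)) * r ^ 2
        ≤ K2sq d K / (2 * c ^ d) * r ^ 2 := by
          gcongr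
          exact min_le_right _ _
      _ ≤ sigmaSq d n K p h t * Real.log n := hh.le_sigmaSq_mul_log hn hsmooth hle hbal
      _ ≤ sigmaSqTrunc d n K p h t * Real.log n := by
          gcongr
          exact le_max_right _ _

lemma IsRateBandwidth.sigmaSqTrunc_le (hh : IsRateBandwidth β c r h) (hn : 2 ≤ n)
    (hsmooth : |(∫ x, K x ^ 2 * p (t - h * x)) - p t * K2sq d K| ≤ r * (K2sq d K / 2))
    (hle : Real.log n / n ≤ r * r ^ (betaBar β)⁻¹)
    (hle_sq : p t * Real.log n / n ≤ r ^ 2 * r ^ (betaBar β)⁻¹) :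
    sigmaSqTrunc d n K p h t ≤
      max (((c / 2) ^ d)⁻¹ ^ 2) (2 * K2sq d K / (Real.log 2 * (c / 2) ^ d)) * r ^ 2 := by
  rw [sigmaSqTrunc, max_mul_of_nonneg _ _ (sq_nonneg r), ← mul_pow]
  exact max_le_max (hh.truncLevel_le hle) (hh.sigmaSq_le hn hsmooth hle hle_sq)

end TruncatedVariance

section ReferenceBandwidth

variable {d n : ℕ} {K p : Vec d → ℝ} {β h : Vec d} {L r : ℝ}

lemma betaBar_pos [NeZero d] (hβ : ∀ i, 0 < β i) : 0 < betaBar β :=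
  inv_pos.2 (Finset.sum_pos (fun i _ => inv_pos.2 (hβ i)) Finset.univ_nonempty)

lemma c8const_pos [NeZero d] (hK : IsEvenKernel β K) (hL : 0 < L) : 0 < c8const d K β L := by
  obtain ⟨i, hi⟩ := exists_eq_ciInf_of_finite (f := fun i : Fin d =>
    (2 * d * L * (∫ x : Vec d, |x i| ^ β i * K x ^ 2) / K2sq d K) ^ (-(β i)⁻¹))
  have hmoment := hK.sq.moment_pos hK.K2sq_pos i
  have hκ := hK.K2sq_pos
  have hd : 0 < d := NeZero.pos d
  rw [c8const, ← hi]
  positivity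

lemma biasBound_const_pos [NeZero d] (hK : IsEvenKernel β K) (hL : 0 < L) {c : ℝ} (hc : 0 < c) :
    0 < biasBound d K β L fun _ => c :=
  mul_pos hL (Finset.sum_pos (fun i _ => mul_pos (hK.abs.moment_pos hK.integral_abs_pos i)
    (Real.rpow_pos_of_pos hc _)) Finset.univ_nonempty)

lemma mul_c8const_rpow_mul_le [NeZero d] (hK : IsEvenKernel β K) (hL : 0 < L) {i : Fin d}
    (hβ : 0 < β i) :
    L * c8const d K β L ^ β i * ∫ x, |x i| ^ β i * K x ^ 2 ≤ K2sq d K / (2 * d) := by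
  have hmoment := hK.sq.moment_pos hK.K2sq_pos i
  have hκ := hK.K2sq_pos
  have hd : 0 < d := NeZero.pos d
  have hpow : c8const d K β L ^ β i ≤
      (2 * d * L * (∫ x : Vec d, |x i| ^ β i * K x ^ 2) / K2sq d K)⁻¹ := by
    rw [← Real.le_rpow_inv_iff_of_pos (c8const_pos hK hL).le (by positivity) hβ,
      Real.inv_rpow (by positivity), ← Real.rpow_neg (by positivity)]
    exact ciInf_le (Set.finite_range _).bddBelow i
  calc L * c8const d K β L ^ β i * ∫ x, |x i| ^ β i * K x ^ 2
      ≤ L * (2 * d * L * (∫ x : Vec d, |x i| ^ β i * K x ^ 2) / K2sq d K)⁻¹ *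
          ∫ x, |x i| ^ β i * K x ^ 2 := by gcongr
    _ = K2sq d K / (2 * d) := by field_simp

lemma IsRateBandwidth.abs_integral_sq_shift_sub_le [NeZero d]
    (hh : IsRateBandwidth β (c8const d K β L) r h) (hK : IsEvenKernel β K)
    (hβ : ∀ i, 0 < β i ∧ β i ≤ 2) (hL : 0 < L) (hp_meas : Measurable p) (hp_nonneg : ∀ x, 0 ≤ p x)
    (hp : HolderAniso d β L p) (t : Vec d) :
    |(∫ x, K x ^ 2 * p (t - h * x)) - p t * K2sq d K| ≤ r * (K2sq d K / 2) := by
  have hterm : ∀ i, L * |h i| ^ β i * ∫ x, |x i| ^ β i * K x ^ 2 ≤ r * (K2sq d K / (2 * d)) :=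
    fun i => by
      have hr := hh.rate_pos
      have hmoment := hK.sq.moment_pos hK.K2sq_pos i
      calc L * |h i| ^ β i * ∫ x, |x i| ^ β i * K x ^ 2
          ≤ L * (c8const d K β L ^ β i * r) * ∫ x, |x i| ^ β i * K x ^ 2 := by
            rw [abs_of_pos (hh.pos i)]
            gcongr
            exact hh.rpow_le (hβ i).1
        _ = r * (L * c8const d K β L ^ β i * ∫ x, |x i| ^ β i * K x ^ 2) := by ring
        _ ≤ r * (K2sq d K / (2 * d)) := by
            gcongr
            exact mul_c8const_rpow_mul_le hK hL (hβ i).1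
  calc |(∫ x, K x ^ 2 * p (t - h * x)) - p t * K2sq d K|
      ≤ ∑ i, L * |h i| ^ β i * ∫ x, |x i| ^ β i * K x ^ 2 :=
        hK.sq.abs_integral_shift_sub_le hp_meas hp_nonneg hp (fun i => (hβ i).2) t h
    _ ≤ ∑ _i : Fin d, r * (K2sq d K / (2 * d)) := Finset.sum_le_sum fun i _ => hterm i
    _ = r * (K2sq d K / 2) := by
        have hd : (d : ℝ) ≠ 0 := NeZero.ne _
        rw [Finset.sum_const, Finset.card_univ, Fintype.card_fin, nsmul_eq_mul]
        field_simp

lemma two_rpow_neg_floor_logb_add_one_mem_Icc {x : ℝ} (hx : 0 < x) :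
    (2 : ℝ) ^ (-((⌊Real.logb 2 (1 / x)⌋ + 1 : ℤ) : ℝ)) ∈ Set.Icc (x / 2) x := by
  have hpow : (2 : ℝ) ^ Real.logb 2 x = x := Real.rpow_logb two_pos (by norm_num) hx
  have hhalf : (2 : ℝ) ^ (Real.logb 2 x - 1) = x / 2 := by
    rw [Real.rpow_sub two_pos, hpow, Real.rpow_one]
  have hfloor := Int.floor_le (Real.logb 2 (1 / x))
  have hfloor_lt := Int.lt_floor_add_one (Real.logb 2 (1 / x))
  rw [one_div, Real.logb_inv] at hfloor hfloor_lt ⊢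
  push_cast
  constructor
  · rw [← hhalf]
    exact Real.rpow_le_rpow_of_exponent_le one_le_two (by linarith)
  · refine le_of_le_of_eq ?_ hpow
    exact Real.rpow_le_rpow_of_exponent_le one_le_two (by linarith)

lemma isRateBandwidth_jbar [NeZero d] (hK : IsEvenKernel β K) (hβ : ∀ i, 0 < β i) (hL : 0 < L)
    (hn : 1 < n) {q : ℝ} (hq : 0 ≤ q) :
    IsRateBandwidth β (c8const d K β L)
      (balancedRate (betaBar β) (Real.log n / n) (q * Real.log n / n))
      (bwOfZ d (jbar d K β L n q)) := by
  have hlog : 0 < Real.log n := Real.log_pos (by exact_mod_cast hn)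
  have hrate : 0 < balancedRate (betaBar β) (Real.log n / n) (q * Real.log n / n) :=
    balancedRate_pos _ _ (by positivity)
  refine ⟨c8const_pos hK hL, hrate, fun i => ?_⟩
  have hbar_eq : hbar d K β L n q i = c8const d K β L *
      balancedRate (betaBar β) (Real.log n / n) (q * Real.log n / n) ^ (β i)⁻¹ := by
    rw [hbar, max_rpow_mul (by positivity) (by positivity) (inv_pos.2 (hβ i)).le, balancedRate]
  rw [← hbar_eq]
  refine two_rpow_neg_floor_logb_add_one_mem_Icc ?_
  rw [hbar_eq]
  exact mul_pos (c8const_pos hK hL) (Real.rpow_pos_of_pos hrate _)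

lemma exists_sigmaSqTrunc_jbar_bounds [NeZero d] (hK : IsEvenKernel β K)
    (hβ : ∀ i, 0 < β i ∧ β i ≤ 2) (hL : 0 < L) :
    ∃ m M : ℝ, 0 < m ∧ 0 < M ∧
      ∀ p : Vec d → ℝ, Measurable p → (∀ x, 0 ≤ p x) → HolderAniso d β L p →
        ∀ t : Vec d, ∀ n : ℕ, 2 ≤ n →
          m * balancedRate (betaBar β) (Real.log n / n) (p t * Real.log n / n) ^ 2 ≤
              sigmaSqTrunc d n K p (bwOfZ d (jbar d K β L n (p t))) t * Real.log n ∧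
            sigmaSqTrunc d n K p (bwOfZ d (jbar d K β L n (p t))) t ≤
              M * balancedRate (betaBar β) (Real.log n / n) (p t * Real.log n / n) ^ 2 := by
  have hc := c8const_pos hK hL
  have hκ := hK.K2sq_pos
  have hβ_pos := fun i => (hβ i).1
  set c := c8const d K β L
  refine ⟨min (Real.log 2 / (c ^ d) ^ 2) (K2sq d K / (2 * c ^ d)),
    max (((c / 2) ^ d)⁻¹ ^ 2) (2 * K2sq d K / (Real.log 2 * (c / 2) ^ d)),
    lt_min (by positivity) (by positivity), lt_max_of_lt_left (by positivity),
    fun p hp_meas hp_nonneg hp t n hn => ?_⟩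
  have hlog : 0 < Real.log n := Real.log_pos (by exact_mod_cast hn)
  have hbw := isRateBandwidth_jbar hK hβ_pos hL hn (hp_nonneg t)
  have hsmooth := hbw.abs_integral_sq_shift_sub_le hK hβ hL hp_meas hp_nonneg hp t
  have hx : 0 < Real.log n / n := by positivity
  have hy : 0 ≤ p t * Real.log n / n :=
    div_nonneg (mul_nonneg (hp_nonneg t) hlog.le) n.cast_nonneg
  have hle := le_balancedRate_mul_rpow (betaBar_pos hβ_pos) hx (p t * Real.log n / n)
  have hle_sq := le_balancedRate_sq_mul_rpow (betaBar_pos hβ_pos) hx hy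
  have hbal := eq_balancedRate_mul_rpow_or (betaBar_pos hβ_pos) hx hy
  exact ⟨hbw.le_sigmaSqTrunc_mul_log hn hsmooth hle hbal, hbw.sigmaSqTrunc_le hn hsmooth hle hle_sq⟩

end ReferenceBandwidth

theorem statement12_general {d : ℕ} (hd : 1 ≤ d) {K : Vec d → ℝ} {β : Vec d}
    (hK : IsEvenKernel β K) (hβ : ∀ i, 0 < β i ∧ β i ≤ 2) {L : ℝ} (hL : 0 < L) :
    ∃ c13 c14 : ℝ, 0 < c13 ∧ 0 < c14 ∧
      ∀ p : Vec d → ℝ, Measurable p → (∀ x, 0 ≤ p x) → HolderAniso d β L p →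
        ∀ t : Vec d, ∀ n : ℕ, 2 ≤ n →
          biasBound d K β L (bwOfZ d (jbar d K β L n (p t))) ≤
              c13 * Real.sqrt (sigmaSqTrunc d n K p (bwOfZ d (jbar d K β L n (p t))) t *
                Real.log n) ∧
            Real.sqrt (sigmaSqTrunc d n K p (bwOfZ d (jbar d K β L n (p t))) t) ≤
              c14 * max ((Real.log n / n) ^ (betaBar β / (betaBar β + 1)))
                ((p t * Real.log n / n) ^ (betaBar β / (2 * betaBar β + 1))) := by
  have : NeZero d := ⟨by omega⟩
  obtain ⟨m, M, hm, hM, hbounds⟩ := exists_sigmaSqTrunc_jbar_bounds hK hβ hL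
  set b := biasBound d K β L fun _ => c8const d K β L
  have hb : 0 < b := biasBound_const_pos hK hL (c8const_pos hK hL)
  refine ⟨b / √m, √M, by positivity, by positivity, fun p hp_meas hp_nonneg hp t n hn => ?_⟩
  have hbw := isRateBandwidth_jbar hK (fun i => (hβ i).1) hL hn (hp_nonneg t)
  obtain ⟨hlower, hupper⟩ := hbounds p hp_meas hp_nonneg hp t n hn
  rw [← balancedRate]
  set r := balancedRate (betaBar β) (Real.log n / n) (p t * Real.log n / n)
  have hsqrt {a : ℝ} (ha : 0 < a) : √(a * r ^ 2) = √a * r := by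
    rw [Real.sqrt_mul ha.le, Real.sqrt_sq hbw.rate_pos.le]
  constructor
  · calc biasBound d K β L (bwOfZ d (jbar d K β L n (p t)))
        ≤ b * r := hbw.biasBound_le (fun i => (hβ i).1) hL.le
      _ = b / √m * √(m * r ^ 2) := by rw [hsqrt hm]; field_simp
      _ ≤ _ := by gcongr
  · exact (Real.sqrt_le_sqrt hupper).trans_eq (hsqrt hM)

/-- Lemma 5.4, properties of the dyadic reference bandwidth `j̄`.
There are constants `c₁₃(β,L), c₁₄(β,L) > 0` such that for every `p ∈ 𝒫_d(β,L)`
(`0 < β_i ≤ 2`), every `t` and every `n ≥ 2`: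
(1) `B_t(j̄) ≤ c₁₃ √(σ²_{t,trunc}(j̄) log n)`, and
(2) `√(σ²_{t,trunc}(j̄)) ≤ c₁₄ max{ (log n/n)^{β̄/(β̄+1)}, (p(t) log n/n)^{β̄/(2β̄+1)} }`. -/
theorem statement12 (d : ℕ) (hd : 1 ≤ d) (K : Vec d → ℝ) (hK : IsProductKernel d K)
    (β : Vec d) (hβ : ∀ i, 0 < β i ∧ β i ≤ 2) (L : ℝ) (hL : 0 < L) :
    ∃ c13 c14 : ℝ, 0 < c13 ∧ 0 < c14 ∧
      ∀ p : Vec d → ℝ, Pclass d β L p → ∀ t : Vec d, ∀ n : ℕ, 2 ≤ n →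
        biasBound d K β L (bwOfZ d (jbar d K β L n (p t))) ≤
            c13 * Real.sqrt (sigmaSqTrunc d n K p (bwOfZ d (jbar d K β L n (p t))) t *
              Real.log n) ∧
          Real.sqrt (sigmaSqTrunc d n K p (bwOfZ d (jbar d K β L n (p t))) t) ≤
            c14 * max ((Real.log n / n) ^ (betaBar β / (betaBar β + 1)))
              ((p t * Real.log n / n) ^ (betaBar β / (2 * betaBar β + 1))) := by
  obtain ⟨c13, c14, hc13, hc14, h⟩ :=
    statement12_general hd (hK.isEvenKernel fun i => (hβ i).1.le) hβ hL
  exact ⟨c13, c14, hc13, hc14, fun p hp => h p hp.1.1 hp.1.2.1 hp.2⟩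
end

section
/- (Bernstein bound (3.8) for the empirical variance ratio.) Let h = (h_1,…,h_d) with h_i > 0 and t ∈ ℝ^d be such that σ_t²(h) > 0. Then for every η > 0: P^{⊗n}( | σ̃_t²(h) / σ_t²(h) − 1 | ≥ η ) ≤ 2 exp( − 3η² / ( 2(3+2η) ‖K‖_sup² ) · σ_t²(h) · n² ∏_{i=1}^d h_i² ). -/
open MeasureTheory Real
open scoped ENNReal BigOperators

/-!
Write `σ̃_t²(h) = ∑ᵢ Yᵢ` with `Yᵢ = K²((t - Xᵢ)/h) / (n² ∏ hᵢ²)`. The `Yᵢ` are independent,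
take values in `[0, b]` for `b = ‖K‖_sup² / (n² ∏ hᵢ²)`, and their means add up to `σ_t²(h)`.
Convexity of the exponential bounds the moment generating function of a `[0, b]`-valued variable
by that of `b` times a Poisson variable with the same mean, so the exponential Markov inequality
yields the multiplicative Chernoff bound `2 exp (-η² / (2 + η) · σ_t²(h) / b)`. It implies the
Bernstein bound because `3η² / (2(3 + 2η)) ≤ η² / (2 + η)`.
-/

section ScalarInequalities

lemma exp_neg_le_one_sub_add_sq_div_two {x : ℝ} (hx : 0 ≤ x) : exp (-x) ≤ 1 - x + x ^ 2 / 2 := by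
  rw [exp_neg, inv_le_iff_one_le_mul₀ (exp_pos x)]
  have hnonneg : 0 ≤ 1 - x + x ^ 2 / 2 := by nlinarith [sq_nonneg (x - 1)]
  calc (1 : ℝ) ≤ 1 + x ^ 4 / 4 := le_add_of_nonneg_right (by positivity)
    _ = (1 - x + x ^ 2 / 2) * (1 + x + x ^ 2 / 2) := by ring
    _ ≤ (1 - x + x ^ 2 / 2) * exp x :=
        mul_le_mul_of_nonneg_left (quadratic_le_exp_of_nonneg hx) hnonneg

lemma sq_div_two_add_le_one_add_mul_log_sub {x : ℝ} (hx : 0 ≤ x) :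
    x ^ 2 / (2 + x) ≤ (1 + x) * log (1 + x) - x :=
  calc x ^ 2 / (2 + x) = (1 + x) * (2 * x / (x + 2)) - x := by field_simp; ring
    _ ≤ (1 + x) * log (1 + x) - x := by gcongr; exact le_log_one_add_of_nonneg hx

lemma three_mul_sq_div_le_sq_div_two_add {x : ℝ} (hx : 0 ≤ x) :
    3 * x ^ 2 / (2 * (3 + 2 * x)) ≤ x ^ 2 / (2 + x) := by
  rw [div_le_div_iff₀ (by positivity) (by positivity)]
  nlinarith [pow_nonneg hx 3]

lemma chernoff_exponent_le_bernstein_exponent {η v w : ℝ} (hη : 0 ≤ η) (hvw : 0 ≤ v / w) :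
    -(η ^ 2 / (2 + η)) * (v / w) ≤ -(3 * η ^ 2) / (2 * (3 + 2 * η) * w) * v :=
  calc -(η ^ 2 / (2 + η)) * (v / w) ≤ -(3 * η ^ 2 / (2 * (3 + 2 * η))) * (v / w) :=
        mul_le_mul_of_nonneg_right (neg_le_neg (three_mul_sq_div_le_sq_div_two_add hη)) hvw
    _ = -(3 * η ^ 2) / (2 * (3 + 2 * η) * w) * v := by
        rw [← neg_div, div_mul_div_comm, div_mul_eq_mul_div]

lemma le_abs_div_sub_one_iff {η x y : ℝ} (hy : 0 < y) : η ≤ |x / y - 1| ↔ η * y ≤ |x - y| := by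
  rw [div_sub_one hy.ne', abs_div, abs_of_pos hy, le_div_iff₀ hy]

lemma exp_mul_le_one_add_of_mem_Icc {b x : ℝ} (hb : 0 < b) (hx : x ∈ Set.Icc 0 b) (t : ℝ) :
    exp (t * x) ≤ 1 + (exp (t * b) - 1) / b * x := by
  have hxb : x / b ≤ 1 := (div_le_one hb).2 hx.2
  have hconvex := convexOn_exp.2 (Set.mem_univ 0) (Set.mem_univ (t * b)) (sub_nonneg.2 hxb)
    (div_nonneg hx.1 hb.le) (sub_add_cancel 1 (x / b))
  simp only [smul_eq_mul, mul_zero, zero_add, exp_zero, mul_one] at hconvex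
  calc exp (t * x) = exp (x / b * (t * b)) := by congr 1; field_simp
    _ ≤ 1 - x / b + x / b * exp (t * b) := hconvex
    _ = 1 + (exp (t * b) - 1) / b * x := by ring

end ScalarInequalities

section MultiplicativeChernoff

open ProbabilityTheory

variable {Ω ι : Type*} {mΩ : MeasurableSpace Ω} {μ : Measure Ω} {b : ℝ}

lemma mgf_le_exp_of_mem_Icc_zero [IsProbabilityMeasure μ] {X : Ω → ℝ} (hb : 0 < b)
    (hm : AEMeasurable X μ) (hX : ∀ᵐ ω ∂μ, X ω ∈ Set.Icc 0 b) (t : ℝ) :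
    mgf X μ t ≤ exp ((exp (t * b) - 1) / b * μ[X]) := by
  have hXint : Integrable X μ := .of_mem_Icc 0 b hm hX
  calc mgf X μ t
      ≤ ∫ ω, 1 + (exp (t * b) - 1) / b * X ω ∂μ :=
        integral_mono_ae (integrable_exp_mul_of_mem_Icc hm hX)
          ((integrable_const 1).add (hXint.const_mul _))
          (hX.mono fun ω hω => exp_mul_le_one_add_of_mem_Icc hb hω t)
    _ = (exp (t * b) - 1) / b * μ[X] + 1 := by
        rw [integral_add (integrable_const 1) (hXint.const_mul _), integral_const_mul,
          integral_const, probReal_univ, one_smul, add_comm]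
    _ ≤ exp ((exp (t * b) - 1) / b * μ[X]) := add_one_le_exp _

variable {X : ι → Ω → ℝ} {s : Finset ι} {η : ℝ}

lemma integrable_exp_mul_sum_of_mem_Icc [IsFiniteMeasure μ] {a : ℝ}
    (hm : ∀ i ∈ s, AEMeasurable (X i) μ) (hX : ∀ i ∈ s, ∀ᵐ ω ∂μ, X i ω ∈ Set.Icc a b) (t : ℝ) :
    Integrable (fun ω => exp (t * (∑ i ∈ s, X i) ω)) μ := by
  refine integrable_exp_mul_of_mem_Icc (a := ∑ _ ∈ s, a) (b := ∑ _ ∈ s, b)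
    (Finset.aemeasurable_sum s hm) ?_
  filter_upwards [(Filter.eventually_all_finset s).2 hX] with ω hω
  rw [Finset.sum_apply]
  exact ⟨Finset.sum_le_sum fun i hi => (hω i hi).1, Finset.sum_le_sum fun i hi => (hω i hi).2⟩

lemma exp_mul_mgf_sum_le_of_iIndepFun (h_indep : iIndepFun X μ) (hm : ∀ i, AEMeasurable (X i) μ)
    (hb : 0 < b) (hX : ∀ i ∈ s, ∀ᵐ ω ∂μ, X i ω ∈ Set.Icc 0 b) (a t : ℝ) :
    exp (-t * (a * ∑ i ∈ s, μ[X i])) * mgf (∑ i ∈ s, X i) μ t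
      ≤ exp ((exp (t * b) - 1 - t * b * a) * ((∑ i ∈ s, μ[X i]) / b)) := by
  have := h_indep.isProbabilityMeasure
  calc exp (-t * (a * ∑ i ∈ s, μ[X i])) * mgf (∑ i ∈ s, X i) μ t
      ≤ exp (-t * (a * ∑ i ∈ s, μ[X i])) * ∏ i ∈ s, exp ((exp (t * b) - 1) / b * μ[X i]) := by
        rw [h_indep.mgf_sum₀ hm]
        gcongr with i hi
        exacts [fun _ _ => mgf_nonneg, mgf_le_exp_of_mem_Icc_zero hb (hm i) (hX i hi) t]
    _ = exp ((exp (t * b) - 1 - t * b * a) * ((∑ i ∈ s, μ[X i]) / b)) := by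
        rw [← exp_sum, ← exp_add, ← Finset.mul_sum]
        congr 1
        field_simp
        ring

lemma sum_integral_nonneg_of_mem_Icc_zero (hX : ∀ i ∈ s, ∀ᵐ ω ∂μ, X i ω ∈ Set.Icc 0 b) :
    0 ≤ ∑ i ∈ s, μ[X i] :=
  Finset.sum_nonneg fun i hi => integral_nonneg_of_ae ((hX i hi).mono fun _ hω => hω.1)

theorem measureReal_one_add_mul_le_sum_le_of_iIndepFun (h_indep : iIndepFun X μ)
    (hm : ∀ i, AEMeasurable (X i) μ) (hb : 0 < b) (hX : ∀ i ∈ s, ∀ᵐ ω ∂μ, X i ω ∈ Set.Icc 0 b)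
    (hη : 0 ≤ η) :
    μ.real {ω | (1 + η) * ∑ i ∈ s, μ[X i] ≤ ∑ i ∈ s, X i ω}
      ≤ exp (-(η ^ 2 / (2 + η)) * ((∑ i ∈ s, μ[X i]) / b)) := by
  have := h_indep.isProbabilityMeasure
  have hmean := sum_integral_nonneg_of_mem_Icc_zero hX
  -- `t = log (1 + η) / b` minimises `exp (t * b) - 1 - t * b * (1 + η)`.
  have hmarkov := measure_ge_le_exp_mul_mgf ((1 + η) * ∑ i ∈ s, μ[X i])
    (div_nonneg (log_nonneg (le_add_of_nonneg_right hη)) hb.le)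
    (integrable_exp_mul_sum_of_mem_Icc (fun i _ => hm i) hX (log (1 + η) / b))
  simp only [Finset.sum_apply] at hmarkov
  refine (hmarkov.trans (exp_mul_mgf_sum_le_of_iIndepFun h_indep hm hb hX _ _)).trans ?_
  rw [div_mul_cancel₀ _ hb.ne', exp_log (by positivity)]
  gcongr
  linarith [sq_div_two_add_le_one_add_mul_log_sub hη]

theorem measureReal_sum_le_one_sub_mul_le_of_iIndepFun (h_indep : iIndepFun X μ)
    (hm : ∀ i, AEMeasurable (X i) μ) (hb : 0 < b) (hX : ∀ i ∈ s, ∀ᵐ ω ∂μ, X i ω ∈ Set.Icc 0 b)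
    (hη : 0 ≤ η) :
    μ.real {ω | ∑ i ∈ s, X i ω ≤ (1 - η) * ∑ i ∈ s, μ[X i]}
      ≤ exp (-(η ^ 2 / 2) * ((∑ i ∈ s, μ[X i]) / b)) := by
  have := h_indep.isProbabilityMeasure
  have hmean := sum_integral_nonneg_of_mem_Icc_zero hX
  -- `t = -η / b` is not optimal, but unlike `log (1 - η) / b` it also covers `η ≥ 1`.
  have hmarkov := measure_le_le_exp_mul_mgf ((1 - η) * ∑ i ∈ s, μ[X i])
    (div_nonpos_of_nonpos_of_nonneg (neg_nonpos.2 hη) hb.le)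
    (integrable_exp_mul_sum_of_mem_Icc (fun i _ => hm i) hX (-η / b))
  simp only [Finset.sum_apply] at hmarkov
  refine (hmarkov.trans (exp_mul_mgf_sum_le_of_iIndepFun h_indep hm hb hX _ _)).trans ?_
  rw [div_mul_cancel₀ _ hb.ne']
  gcongr
  linarith [exp_neg_le_one_sub_add_sq_div_two hη]

theorem measureReal_mul_le_abs_sum_sub_le_of_iIndepFun (h_indep : iIndepFun X μ)
    (hm : ∀ i, AEMeasurable (X i) μ) (hb : 0 < b) (hX : ∀ i ∈ s, ∀ᵐ ω ∂μ, X i ω ∈ Set.Icc 0 b)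
    (hη : 0 ≤ η) :
    μ.real {ω | η * ∑ i ∈ s, μ[X i] ≤ |∑ i ∈ s, X i ω - ∑ i ∈ s, μ[X i]|}
      ≤ 2 * exp (-(η ^ 2 / (2 + η)) * ((∑ i ∈ s, μ[X i]) / b)) := by
  have := h_indep.isProbabilityMeasure
  have hmean := sum_integral_nonneg_of_mem_Icc_zero hX
  set m := ∑ i ∈ s, μ[X i]
  have hcover : {ω | η * m ≤ |∑ i ∈ s, X i ω - m|}
      ⊆ {ω | (1 + η) * m ≤ ∑ i ∈ s, X i ω} ∪ {ω | ∑ i ∈ s, X i ω ≤ (1 - η) * m} := by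
    intro ω hω
    simp only [Set.mem_ofPred_eq, Set.mem_union] at hω ⊢
    rcases le_abs.1 hω with hupper | hlower
    · exact .inl (by linarith)
    · exact .inr (by linarith)
  have hlower_exponent : exp (-(η ^ 2 / 2) * (m / b)) ≤ exp (-(η ^ 2 / (2 + η)) * (m / b)) := by
    gcongr
    linarith
  calc μ.real {ω | η * m ≤ |∑ i ∈ s, X i ω - m|}
      ≤ μ.real {ω | (1 + η) * m ≤ ∑ i ∈ s, X i ω}
          + μ.real {ω | ∑ i ∈ s, X i ω ≤ (1 - η) * m} :=
        (measureReal_mono hcover).trans (measureReal_union_le _ _)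
    _ ≤ exp (-(η ^ 2 / (2 + η)) * (m / b)) + exp (-(η ^ 2 / (2 + η)) * (m / b)) :=
        add_le_add (measureReal_one_add_mul_le_sum_le_of_iIndepFun h_indep hm hb hX hη)
          ((measureReal_sum_le_one_sub_mul_le_of_iIndepFun h_indep hm hb hX hη).trans
            hlower_exponent)
    _ = 2 * exp (-(η ^ 2 / (2 + η)) * (m / b)) := (two_mul _).symm

end MultiplicativeChernoff

section ProbDensity

variable {d : ℕ} {p : Vec d → ℝ}

lemma IsProbDensity.isProbabilityMeasure_pdfMeasure (hp : IsProbDensity d p) :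
    IsProbabilityMeasure (pdfMeasure d p) := by
  obtain ⟨-, hp_nonneg, hp_integral⟩ := hp
  have hp_integrable : Integrable p :=
    .of_integral_ne_zero (hp_integral.trans_ne one_ne_zero)
  exact ⟨by rw [pdfMeasure, withDensity_apply _ MeasurableSet.univ, Measure.restrict_univ,
    ← ofReal_integral_eq_lintegral_ofReal hp_integrable (ae_of_all _ hp_nonneg), hp_integral,
    ENNReal.ofReal_one]⟩

lemma IsProbDensity.isProbabilityMeasure_jointMeasure {n : ℕ} (hp : IsProbDensity d p) :
    IsProbabilityMeasure (jointMeasure d n p) := by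
  have := hp.isProbabilityMeasure_pdfMeasure
  exact inferInstanceAs (IsProbabilityMeasure (Measure.pi fun _ => pdfMeasure d p))

lemma IsProbDensity.integral_pdfMeasure (hp : IsProbDensity d p) (g : Vec d → ℝ) :
    ∫ y, g y ∂pdfMeasure d p = ∫ y, g y * p y := by
  rw [pdfMeasure, integral_withDensity_eq_integral_toReal_smul hp.1.ennreal_ofReal
    (ae_of_all _ fun _ => ENNReal.ofReal_lt_top)]
  simp only [ENNReal.toReal_ofReal (hp.2.1 _), smul_eq_mul, mul_comm]

end ProbDensity

section CompactSupport

variable {α : Type*} [TopologicalSpace α] {f : α → ℝ} {s : Set α}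

lemma measurable_of_continuousOn_of_eq_zero [MeasurableSpace α] [OpensMeasurableSpace α]
    (hs : MeasurableSet s) (hf : ContinuousOn f s) (hzero : ∀ x, x ∉ s → f x = 0) :
    Measurable f := by
  classical
  have hpiecewise : s.piecewise f (fun _ => 0) = f := by
    ext x
    by_cases hx : x ∈ s
    · exact s.piecewise_eq_of_mem _ _ hx
    · rw [s.piecewise_eq_of_notMem _ _ hx, hzero x hx]
  exact hpiecewise ▸ hf.measurable_piecewise continuousOn_const hs

lemma exists_abs_le_of_continuousOn_of_eq_zero (hs : IsCompact s) (hf : ContinuousOn f s)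
    (hzero : ∀ x, x ∉ s → f x = 0) : ∃ C, ∀ x, |f x| ≤ C := by
  obtain ⟨C, hC⟩ := hs.exists_bound_of_continuousOn hf
  refine ⟨max C 0, fun x => ?_⟩
  by_cases hx : x ∈ s
  · exact (hC x hx).trans (le_max_left _ _)
  · exact (abs_eq_zero.2 (hzero x hx)).trans_le (le_max_right _ _)

end CompactSupport

section Kernel

variable {d : ℕ} {K : Vec d → ℝ}

lemma IsProductKernel.measurable (hK : IsProductKernel d K) : Measurable K := by
  obtain ⟨Ki, hprod, hKi⟩ := hK
  have hKi_meas (i : Fin d) : Measurable (Ki i) := by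
    obtain ⟨-, -, hsupp, hcont, -, -⟩ := hKi i
    exact measurable_of_continuousOn_of_eq_zero measurableSet_Icc hcont hsupp
  rw [funext hprod]
  fun_prop

lemma IsProductKernel.bddAbove_range_abs (hK : IsProductKernel d K) :
    BddAbove (Set.range fun x => |K x|) := by
  obtain ⟨Ki, hprod, hKi⟩ := hK
  have hKi_bdd (i : Fin d) : ∃ C, ∀ y, |Ki i y| ≤ C := by
    obtain ⟨-, -, hsupp, hcont, -, -⟩ := hKi i
    exact exists_abs_le_of_continuousOn_of_eq_zero isCompact_Icc hcont hsupp
  choose C hC using hKi_bdd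
  refine ⟨∏ i, C i, Set.forall_mem_range.2 fun x => ?_⟩
  simp only [hprod, Finset.abs_prod]
  exact Finset.prod_le_prod (fun i _ => abs_nonneg _) fun i _ => hC i (x i)

lemma sq_le_KsupNorm_sq (hK : BddAbove (Set.range fun x => |K x|)) (x : Vec d) :
    K x ^ 2 ≤ KsupNorm d K ^ 2 :=
  sq_le_sq' (abs_le.1 (le_ciSup hK x)).1 (abs_le.1 (le_ciSup hK x)).2

end Kernel

section EmpiricalVariance

variable {d n : ℕ} {K p : Vec d → ℝ} {h t : Vec d} {η : ℝ}

/-- The contribution `K²((t - x)/h) / (n² ∏ h_i²)` of a single observation `x` to the empirical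
variance `σ̃_t²(h)`. -/
noncomputable def sigmaTildeTerm (d n : ℕ) (K : Vec d → ℝ) (h t x : Vec d) : ℝ :=
  ((n : ℝ) ^ 2 * (∏ i, h i) ^ 2)⁻¹ * K (fun j => (t j - x j) / h j) ^ 2

lemma sigmaTildeSq_eq_sum (X : Sample d n) :
    sigmaTildeSq d n K h X t = ∑ i, sigmaTildeTerm d n K h t (X i) :=
  Finset.mul_sum _ _ _

lemma measurable_sigmaTildeTerm (hK : Measurable K) : Measurable (sigmaTildeTerm d n K h t) := by
  unfold sigmaTildeTerm
  fun_prop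

lemma sigmaTildeTerm_mem_Icc (hK : BddAbove (Set.range fun x => |K x|)) (x : Vec d) :
    sigmaTildeTerm d n K h t x
      ∈ Set.Icc 0 (((n : ℝ) ^ 2 * (∏ i, h i) ^ 2)⁻¹ * KsupNorm d K ^ 2) :=
  ⟨by unfold sigmaTildeTerm; positivity,
    mul_le_mul_of_nonneg_left (sq_le_KsupNorm_sq hK _) (by positivity)⟩

lemma IsProbDensity.nat_mul_integral_sigmaTildeTerm (hp : IsProbDensity d p) :
    n * ∫ x, sigmaTildeTerm d n K h t x ∂pdfMeasure d p = sigmaSq d n K p h t := by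
  have hterm (x : Vec d) : sigmaTildeTerm d n K h t x
      = ((n : ℝ) ^ 2)⁻¹ * scaledKernel d K h (fun i => t i - x i) ^ 2 := by
    unfold sigmaTildeTerm scaledKernel
    ring
  simp only [hp.integral_pdfMeasure, hterm, sigmaSq, mul_assoc, integral_const_mul]
  rw [← mul_assoc]
  congr 1
  field_simp

lemma IsProbDensity.sum_integral_sigmaTildeTerm (hp : IsProbDensity d p) (hK : Measurable K) :
    ∑ i, ∫ X, sigmaTildeTerm d n K h t (X i) ∂jointMeasure d n p = sigmaSq d n K p h t := by
  have := hp.isProbabilityMeasure_pdfMeasure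
  have hmarginal (i : Fin n) : ∫ X, sigmaTildeTerm d n K h t (X i) ∂jointMeasure d n p
      = ∫ x, sigmaTildeTerm d n K h t x ∂pdfMeasure d p :=
    integral_comp_eval (measurable_sigmaTildeTerm hK).aestronglyMeasurable
  simp only [hmarginal, Finset.sum_const, Finset.card_univ, Fintype.card_fin, nsmul_eq_mul]
  exact hp.nat_mul_integral_sigmaTildeTerm

lemma IsProbDensity.iIndepFun_sigmaTildeTerm (hp : IsProbDensity d p) (hK : Measurable K) :
    ProbabilityTheory.iIndepFun (fun i (X : Sample d n) => sigmaTildeTerm d n K h t (X i))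
      (jointMeasure d n p) := by
  have := hp.isProbabilityMeasure_pdfMeasure
  exact ProbabilityTheory.iIndepFun_pi fun _ => (measurable_sigmaTildeTerm hK).aemeasurable

lemma sigmaTildeTerm_bound_pos_of_sigmaSq_pos (hp : IsProbDensity d p)
    (hK : BddAbove (Set.range fun x => |K x|)) (hσ : 0 < sigmaSq d n K p h t) :
    0 < ((n : ℝ) ^ 2 * (∏ i, h i) ^ 2)⁻¹ * KsupNorm d K ^ 2 := by
  by_contra! hbound
  rw [← hp.nat_mul_integral_sigmaTildeTerm] at hσ
  exact hσ.not_ge (mul_nonpos_of_nonneg_of_nonpos n.cast_nonneg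
    (integral_nonpos fun x => (sigmaTildeTerm_mem_Icc hK x).2.trans hbound))

theorem statement17_general (hK : Measurable K) (hK_bdd : BddAbove (Set.range fun x => |K x|))
    (hp : IsProbDensity d p) (hσ : 0 < sigmaSq d n K p h t) (hη : 0 ≤ η) :
    jointMeasure d n p {X | η ≤ |sigmaTildeSq d n K h X t / sigmaSq d n K p h t - 1|} ≤
      ENNReal.ofReal (2 * exp (-(η ^ 2 / (2 + η)) *
        (sigmaSq d n K p h t * ((n : ℝ) ^ 2 * ∏ i, h i ^ 2) / KsupNorm d K ^ 2))) := by
  have := hp.isProbabilityMeasure_jointMeasure (n := n)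
  have hchernoff := measureReal_mul_le_abs_sum_sub_le_of_iIndepFun (s := Finset.univ)
    (hp.iIndepFun_sigmaTildeTerm (n := n) (h := h) (t := t) hK)
    (fun i => ((measurable_sigmaTildeTerm hK).comp (measurable_pi_apply i)).aemeasurable)
    (sigmaTildeTerm_bound_pos_of_sigmaSq_pos hp hK_bdd hσ)
    (fun i _ => ae_of_all _ fun X => sigmaTildeTerm_mem_Icc hK_bdd (X i)) hη
  rw [hp.sum_integral_sigmaTildeTerm hK] at hchernoff
  have hratio : sigmaSq d n K p h t / (((n : ℝ) ^ 2 * (∏ i, h i) ^ 2)⁻¹ * KsupNorm d K ^ 2)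
      = sigmaSq d n K p h t * ((n : ℝ) ^ 2 * ∏ i, h i ^ 2) / KsupNorm d K ^ 2 := by
    rw [Finset.prod_pow, ← div_div, div_inv_eq_mul]
  simp only [le_abs_div_sub_one_iff hσ, sigmaTildeSq_eq_sum]
  rw [← hratio, ← ofReal_measureReal]
  exact ENNReal.ofReal_le_ofReal hchernoff

end EmpiricalVariance

/-- Bernstein bound (3.8) for the empirical variance ratio.
If `σ_t²(h) > 0`, then for every `η > 0`:
`P^{⊗n}( |σ̃_t²(h)/σ_t²(h) - 1| ≥ η )
  ≤ 2 exp( -3η²/(2(3+2η)‖K‖_sup²) · σ_t²(h) · n² ∏ h_i² )`. -/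
theorem statement17 (d : ℕ) (hd : 1 ≤ d) (K : Vec d → ℝ) (hK : IsProductKernel d K)
    (p : Vec d → ℝ) (hp : IsProbDensity d p) (n : ℕ) (hn : 2 ≤ n)
    (h : Vec d) (hh : ∀ i, 0 < h i) (t : Vec d)
    (hσ : 0 < sigmaSq d n K p h t) (η : ℝ) (hη : 0 < η) :
    jointMeasure d n p
        {X | η ≤ |sigmaTildeSq d n K h X t / sigmaSq d n K p h t - 1|} ≤
      ENNReal.ofReal
        (2 * Real.exp (-(3 * η ^ 2) / (2 * (3 + 2 * η) * (KsupNorm d K) ^ 2) *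
          (sigmaSq d n K p h t * ((n : ℝ) ^ 2 * ∏ i, h i ^ 2)))) := by
  refine (statement17_general hK.measurable hK.bddAbove_range_abs hp hσ hη.le).trans ?_
  gcongr ENNReal.ofReal (2 * rexp ?_)
  exact chernoff_exponent_le_bernstein_exponent hη.le (by positivity)
end
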